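/- Let R be the set of states reachable from the origin along trajectories contained in V*: R = { ξ ∈ ℝⁿ : ∃ T ≥ 0 and an input sequence u(0),…,u(T−1) such that the trajectory with x(0) = 0 satisfies x(t) ∈ V* for all t ∈ {0,…,T} and x(T) = ξ }. Then R is a subspace of ℝⁿ and R = V* ∩ S*. -/

import Mathlib

/-- The increasing sequence of subspaces converging to S*. -/
def seqS {n m p : ℕ} (A : Matrix (Fin n) (Fin n) ℝ) (B : Matrix (Fin n) (Fin m) ℝ)
    (C : Matrix (Fin p) (Fin n) ℝ) : ℕ → Submodule ℝ (Fin n → ℝ)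
  | 0 => ⊥
  | k + 1 => (seqS A B C k ⊓ LinearMap.ker C.mulVecLin).map A.mulVecLin ⊔
      LinearMap.range B.mulVecLin

theorem seqS_mono {n m p : ℕ} (A : Matrix (Fin n) (Fin n) ℝ) (B : Matrix (Fin n) (Fin m) ℝ)
    (C : Matrix (Fin p) (Fin n) ℝ) : Monotone (seqS A B C) := by
  refine monotone_nat_of_le_succ fun k => ?_
  induction k with
  | zero => exact bot_le
  | succ k ih => exact sup_le_sup_right (Submodule.map_mono (inf_le_inf_right _ ih)) _

/-- the set R of states reachable from the origin along
trajectories contained in V* is a subspace and equals R* = V* ∩ S*. -/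
theorem stmt_14
    (n m p : ℕ)
    (A : Matrix (Fin n) (Fin n) ℝ) (B : Matrix (Fin n) (Fin m) ℝ)
    (C : Matrix (Fin p) (Fin n) ℝ)
    -- V* : largest (A, Im B)-controlled invariant subspace contained in Ker C
    (Vstar : Submodule ℝ (Fin n → ℝ))
    (hVinv : ∀ v ∈ Vstar, A.mulVec v ∈ Vstar ⊔ LinearMap.range B.mulVecLin)
    (hVker : Vstar ≤ LinearMap.ker C.mulVecLin)
    (hVmax : ∀ W : Submodule ℝ (Fin n → ℝ),
      (∀ v ∈ W, A.mulVec v ∈ W ⊔ LinearMap.range B.mulVecLin) →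
      W ≤ LinearMap.ker C.mulVecLin → W ≤ Vstar)
    -- S* : smallest (A, Ker C)-conditioned invariant subspace containing Im B
    (Sstar : Submodule ℝ (Fin n → ℝ))
    (hSinv : ∀ v ∈ Sstar ⊓ LinearMap.ker C.mulVecLin, A.mulVec v ∈ Sstar)
    (hSim : LinearMap.range B.mulVecLin ≤ Sstar)
    (hSmin : ∀ W : Submodule ℝ (Fin n → ℝ),
      (∀ v ∈ W ⊓ LinearMap.ker C.mulVecLin, A.mulVec v ∈ W) →
      LinearMap.range B.mulVecLin ≤ W → Sstar ≤ W) :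
    -- R is a subspace and R = V* ∩ S* (the set equality with the submodule
    -- V* ⊓ S* expresses both claims)
    {ξ : Fin n → ℝ |
      ∃ (T : ℕ) (x : ℕ → Fin n → ℝ) (u : ℕ → Fin m → ℝ),
        x 0 = 0 ∧
        (∀ t, x (t + 1) = A.mulVec (x t) + B.mulVec (u t)) ∧
        (∀ t ≤ T, x t ∈ Vstar) ∧
        x T = ξ}
      = ((Vstar ⊓ Sstar : Submodule ℝ (Fin n → ℝ)) : Set (Fin n → ℝ)) := by
  ext ξ
  simp only [Set.mem_setOf_eq, SetLike.mem_coe]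
  constructor
  · rintro ⟨T, x, u, h0, hstep, hV, rfl⟩
    refine ⟨hV T le_rfl, ?_⟩
    have key : ∀ t ≤ T, x t ∈ Sstar := by
      intro t
      induction t with
      | zero => intro _; rw [h0]; exact Sstar.zero_mem
      | succ t ih =>
        intro ht
        rw [hstep]
        exact Sstar.add_mem (hSinv _ ⟨ih (by omega), hVker (hV t (by omega))⟩)
          (hSim ⟨u t, rfl⟩)
    exact key T le_rfl
  · rintro ⟨hξV, hξS⟩
    have hle : Sstar ≤ ⨆ k, seqS A B C k := by
      apply hSmin
      · rintro v ⟨hv, hvC⟩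
        obtain ⟨k, hk⟩ := (Submodule.mem_iSup_of_directed _
          (seqS_mono A B C).directed_le).1 hv
        exact (le_iSup (seqS A B C) (k + 1))
          (Submodule.mem_sup_left (Submodule.mem_map_of_mem ⟨hk, hvC⟩))
      · exact le_trans (le_sup_right) (le_iSup (seqS A B C) 1)
    obtain ⟨k, hk⟩ := (Submodule.mem_iSup_of_directed _
      (seqS_mono A B C).directed_le).1 (hle hξS)
    clear hξS
    induction k generalizing ξ with
    | zero =>
      have h0 : ξ = 0 := hk
      exact ⟨0, fun _ => 0, fun _ => 0, rfl, by simp, by simp, h0.symm⟩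
    | succ k ih =>
      obtain ⟨a, ⟨v, ⟨hvk, hvC⟩, rfl⟩, b, ⟨w, rfl⟩, hab⟩ := Submodule.mem_sup.1 hk
      simp only [Matrix.mulVecLin_apply] at hab
      have hvV : v ∈ Vstar := by
        have hW : Vstar ⊔ Submodule.span ℝ {v} ≤ Vstar := by
          apply hVmax
          · intro z hz
            obtain ⟨y, hy, z', hz', rfl⟩ := Submodule.mem_sup.1 hz
            obtain ⟨c, rfl⟩ := Submodule.mem_span_singleton.1 hz'
            rw [Matrix.mulVec_add, Matrix.mulVec_smul]
            have hmono : Vstar ⊔ LinearMap.range B.mulVecLin ≤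
                (Vstar ⊔ Submodule.span ℝ {v}) ⊔ LinearMap.range B.mulVecLin :=
              sup_le_sup_right le_sup_left _
            apply hmono
            refine Submodule.add_mem _ (hVinv y hy) (Submodule.smul_mem _ _ ?_)
            rw [eq_sub_of_add_eq hab]
            exact Submodule.sub_mem _ (Submodule.mem_sup_left hξV)
              (Submodule.mem_sup_right ⟨w, rfl⟩)
          · refine sup_le hVker ?_
            rw [Submodule.span_singleton_le_iff_mem]
            exact hvC
        exact hW (Submodule.mem_sup_right (Submodule.mem_span_singleton_self v))
      obtain ⟨T, x, u, h0, hstep, hV, hT⟩ := ih v hvV hvk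
      let u' : ℕ → Fin m → ℝ := fun t => if t = T then w else u t
      let x' : ℕ → Fin n → ℝ := fun t =>
        Nat.rec 0 (fun t y => A.mulVec y + B.mulVec (u' t)) t
      have hs : ∀ t, x' (t + 1) = A.mulVec (x' t) + B.mulVec (u' t) := fun _ => rfl
      have hx : ∀ t ≤ T, x' t = x t := by
        intro t
        induction t with
        | zero => intro _; exact h0.symm
        | succ t iht =>
          intro ht
          have hne : t ≠ T := by omega
          rw [hs, hstep, iht (by omega)]
          simp [u', hne]
      have hlast : x' (T + 1) = ξ := by
        rw [hs, hx T le_rfl, hT, ← hab]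
        simp [u']
      refine ⟨T + 1, x', u', rfl, hs, ?_, hlast⟩
      intro t ht
      rcases Nat.lt_or_ge T t with h | h
      · have : t = T + 1 := by omega
        rw [this, hlast]
        exact hξV
      · rw [hx t h]
        exact hV t h
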